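/- Let n ≥ 1, let π be a uniformly random permutation of {1,…,n}, and let W = #{j ∈ {1,…,n} : π(j) = j} be the number of fixed points of π. Then for every integer k ≥ 2, |P(W ≥ k)/F̄_1(k) − 1| ≤ (2/n)·C1(1,k). -/

import Mathlib

open MeasureTheory ProbabilityTheory Finset Real

/-- Poisson point probability `π_j(λ) = e^{-λ} λ^j / j!`. -/
noncomputable def poissonPMF (l : ℝ) (j : ℕ) : ℝ := Real.exp (-l) * l ^ j / (Nat.factorial j)

/-- Poisson CDF `F_λ(j) = Σ_{i=0}^{j} π_i(λ)`. -/
noncomputable def poissonCDF (l : ℝ) (j : ℕ) : ℝ := ∑ i ∈ Finset.range (j + 1), poissonPMF l i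

/-- Poisson right tail `F̄_λ(j) = Σ_{i=j}^{∞} π_i(λ)`. -/
noncomputable def poissonTail (l : ℝ) (j : ℕ) : ℝ := ∑' i : ℕ, poissonPMF l (j + i)

/-- `C0(λ,k) = F_λ(k-1)/(k·π_k(λ))`. -/
noncomputable def SteinC0 (l : ℝ) (k : ℕ) : ℝ := poissonCDF l (k - 1) / (k * poissonPMF l k)

/-- `C1(λ,k)`. -/
noncomputable def SteinC1 (l : ℝ) (k : ℕ) : ℝ :=
  SteinC0 l k * (1 - min (poissonCDF l (k - 2) * l / ((k - 1) * poissonCDF l (k - 1)))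
    (poissonTail l (k + 1) * k / (poissonTail l k * l)))

/-- `C2(λ,k)`. -/
noncomputable def SteinC2 (l : ℝ) (k : ℕ) : ℝ :=
  SteinC0 l k * (2 - poissonCDF l (k - 2) * l / ((k - 1) * poissonCDF l (k - 1))
    - poissonTail l (k + 1) * k / (poissonTail l k * l))

/-- `f` solves the Poisson–Stein equation for the indicator of `[k,∞)`, with `f 0 = f 1`. -/
def IsSteinSolution (l : ℝ) (k : ℕ) (f : ℕ → ℝ) : Prop :=
  f 0 = f 1 ∧ ∀ j : ℕ, l * f (j + 1) - (j : ℝ) * f j =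
    (if k ≤ j then (1 : ℝ) else 0) - poissonTail l k

/-!
Stein's method with a size-bias coupling. The solution `f` of the Poisson–Stein equation for the
indicator of `[k, ∞)` is a negative multiple of `F_λ(j-1)/(j·π_j(λ))` for `j ≤ k` and of
`F̄_λ(j)/(j·π_j(λ))` for `j ≥ k`. Both ratios are convex, the first increasing and the second
decreasing, so the steepest increments of `f` are the two adjacent to `k`; the larger of them is
`C1(λ,k)·F̄_λ(k)`.

If `τ` is uniform among the permutations fixing `i` and `j` is an independent uniform point, then
`swap i j * τ` is a uniform permutation. One plus its number of fixed points differs from the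
number of fixed points of `τ` only if `τ` fixes `j`, and then by one. Averaging over `i`, the
expected discrepancy is `E[W²]/n`, and `E[W²] ≤ 2` by Burnside's lemma because the symmetric group
has at most two orbits on pairs.
-/

section PoissonWeights

variable {l : ℝ}

lemma poissonPMF_pos (hl : 0 < l) (j : ℕ) : 0 < _root_.poissonPMF l j := by
  unfold _root_.poissonPMF
  positivity

lemma succ_mul_poissonPMF_succ (l : ℝ) (j : ℕ) :
    (j + 1) * _root_.poissonPMF l (j + 1) = l * _root_.poissonPMF l j := by
  simp only [_root_.poissonPMF, Nat.factorial_succ, Nat.cast_mul, Nat.cast_succ]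
  field

lemma hasSum_poissonPMF (l : ℝ) : HasSum (_root_.poissonPMF l) 1 := by
  have h := (NormedSpace.expSeries_div_hasSum_exp l).mul_left (exp (-l))
  rw [← exp_eq_exp_ℝ, ← exp_add, neg_add_cancel, exp_zero] at h
  exact h.congr_fun fun j => mul_div_assoc _ _ _

lemma hasSum_poissonTail (l : ℝ) (j : ℕ) :
    HasSum (fun i => _root_.poissonPMF l (j + i)) (poissonTail l j) :=
  ((hasSum_poissonPMF l).summable.comp_injective (add_right_injective j)).hasSum

lemma poissonCDF_succ (l : ℝ) (j : ℕ) :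
    poissonCDF l (j + 1) = poissonCDF l j + _root_.poissonPMF l (j + 1) :=
  sum_range_succ _ _

lemma poissonCDF_add_poissonTail_succ (l : ℝ) (j : ℕ) :
    poissonCDF l j + poissonTail l (j + 1) = 1 := by
  simpa only [poissonCDF, poissonTail, add_comm, (hasSum_poissonPMF l).tsum_eq] using
    (hasSum_poissonPMF l).summable.sum_add_tsum_nat_add (j + 1)

lemma poissonTail_succ (l : ℝ) (j : ℕ) :
    poissonTail l (j + 1) = _root_.poissonPMF l (j + 1) + poissonTail l (j + 2) := by
  linarith [poissonCDF_add_poissonTail_succ l j, poissonCDF_add_poissonTail_succ l (j + 1),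
    poissonCDF_succ l j]

lemma poissonCDF_pos (hl : 0 < l) (j : ℕ) : 0 < poissonCDF l j :=
  sum_pos (fun i _ => poissonPMF_pos hl i) nonempty_range_add_one

lemma poissonTail_pos (hl : 0 < l) (j : ℕ) : 0 < poissonTail l j :=
  (hasSum_poissonTail l j).summable.tsum_pos (fun i => (poissonPMF_pos hl (j + i)).le) 0
    (poissonPMF_pos hl j)

end PoissonWeights

section SteinRatios

variable {l : ℝ}

lemma mul_SteinC0_succ (hl : 0 < l) (j : ℕ) :
    l * SteinC0 l (j + 1) = 1 + j * SteinC0 l j := by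
  have hstep := succ_mul_poissonPMF_succ l j
  have hpos := poissonPMF_pos hl j
  have hratio : l * SteinC0 l (j + 1) = poissonCDF l j / _root_.poissonPMF l j := by
    simp only [SteinC0, Nat.add_sub_cancel, Nat.cast_succ, hstep]
    field
  rw [hratio]
  cases j with
  | zero =>
    -- The junk value `SteinC0 l 0` is multiplied by `0`.
    simp [poissonCDF, hpos.ne']
  | succ j =>
    simp only [SteinC0, Nat.add_sub_cancel, poissonCDF_succ]
    field

lemma SteinC0_succ_pos (hl : 0 < l) (j : ℕ) : 0 < SteinC0 l (j + 1) :=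
  div_pos (poissonCDF_pos hl j) (mul_pos (by positivity) (poissonPMF_pos hl (j + 1)))

lemma mul_SteinC0_succ_sub (hl : 0 < l) (j : ℕ) :
    l * (SteinC0 l (j + 2) - SteinC0 l (j + 1)) =
      j * (SteinC0 l (j + 1) - SteinC0 l j) + SteinC0 l (j + 1) := by
  have hnext := mul_SteinC0_succ hl (j + 1)
  push_cast at hnext
  linear_combination hnext - mul_SteinC0_succ hl j

lemma SteinC0_succ_le_succ_succ (hl : 0 < l) (j : ℕ) :
    SteinC0 l (j + 1) ≤ SteinC0 l (j + 2) := by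
  rw [← sub_nonneg, ← mul_nonneg_iff_of_pos_left hl, mul_SteinC0_succ_sub hl]
  have hpos := SteinC0_succ_pos hl j
  cases j with
  | zero => simpa using hpos.le
  | succ j =>
    have ih := sub_nonneg.2 (SteinC0_succ_le_succ_succ hl j)
    positivity

lemma monotone_SteinC0_succ_sub (hl : 0 < l) :
    Monotone fun j => SteinC0 l (j + 2) - SteinC0 l (j + 1) := by
  have hrec (j : ℕ) : l * ((SteinC0 l (j + 3) - SteinC0 l (j + 2)) -
      (SteinC0 l (j + 2) - SteinC0 l (j + 1))) =
      2 * (SteinC0 l (j + 2) - SteinC0 l (j + 1)) +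
        j * ((SteinC0 l (j + 2) - SteinC0 l (j + 1)) - (SteinC0 l (j + 1) - SteinC0 l j)) := by
    have hnext := mul_SteinC0_succ_sub hl (j + 1)
    push_cast at hnext
    linear_combination hnext - mul_SteinC0_succ_sub hl j
  refine monotone_nat_of_le_succ fun j => ?_
  rw [← sub_nonneg, ← mul_nonneg_iff_of_pos_left hl, hrec]
  have hinc (j : ℕ) := sub_nonneg.2 (SteinC0_succ_le_succ_succ hl j)
  induction j with
  | zero => simpa using hinc 0
  | succ j ih =>
    rw [← hrec, mul_nonneg_iff_of_pos_left hl] at ih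
    exact add_nonneg (mul_nonneg two_pos.le (hinc (j + 1))) (mul_nonneg (by positivity) ih)

/-- The ratio `F̄_λ(k)/(k·π_k(λ))`, the upper-tail counterpart of `SteinC0`; up to a constant
factor it is the Stein solution on `[k, ∞)`. Only `k ≥ 1` is meaningful. -/
noncomputable def poissonTailRatio (l : ℝ) (k : ℕ) : ℝ :=
  poissonTail l k / (k * _root_.poissonPMF l k)

lemma mul_poissonTailRatio_succ (hl : 0 < l) (j : ℕ) :
    l * poissonTailRatio l (j + 2) = (j + 1) * poissonTailRatio l (j + 1) - 1 := by
  have hstep := succ_mul_poissonPMF_succ l (j + 1)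
  have hpos := poissonPMF_pos hl (j + 1)
  have hcast : (((j + 2 : ℕ) : ℝ)) = ((j + 1 : ℕ) : ℝ) + 1 := by push_cast; ring
  simp only [poissonTailRatio, hcast, hstep, poissonTail_succ l j]
  push_cast
  field

lemma hasSum_poissonTailRatio_succ (hl : 0 < l) (j : ℕ) :
    HasSum (fun i => l ^ i / ((j + 1).ascFactorial (i + 1) : ℝ)) (poissonTailRatio l (j + 1)) := by
  refine ((hasSum_poissonTail l (j + 1)).div_const _).congr_fun fun i => ?_
  have hfact := Nat.factorial_mul_ascFactorial j (i + 1)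
  have hfact' : ((j + 1 + i).factorial : ℝ) = j.factorial * (j + 1).ascFactorial (i + 1) := by
    rw [add_right_comm]
    exact_mod_cast hfact.symm
  rw [Nat.cast_succ, succ_mul_poissonPMF_succ]
  simp only [_root_.poissonPMF, hfact']
  field

lemma inv_ascFactorial_sub_inv_ascFactorial_succ (j i : ℕ) :
    ((j + 1).ascFactorial (i + 1) : ℝ)⁻¹ - ((j + 2).ascFactorial (i + 1) : ℝ)⁻¹ =
      (i + 1) / (j + 1).ascFactorial (i + 2) := by
  have hleft : ((j + 1).ascFactorial (i + 2) : ℝ) =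
      (j + i + 2) * (j + 1).ascFactorial (i + 1) := by
    rw [Nat.ascFactorial_succ]
    push_cast
    ring
  have hright : (j + 1) * ((j + 2).ascFactorial (i + 1) : ℝ) =
      (j + i + 2) * (j + 1).ascFactorial (i + 1) := by
    rw [← hleft]
    exact_mod_cast Nat.succ_ascFactorial (j + 1) (i + 1)
  rw [hleft]
  field_simp
  linear_combination hright

lemma hasSum_poissonTailRatio_succ_sub (hl : 0 < l) (j : ℕ) :
    HasSum (fun i => l ^ i * ((i + 1) / ((j + 1).ascFactorial (i + 2) : ℝ)))
      (poissonTailRatio l (j + 1) - poissonTailRatio l (j + 2)) := by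
  refine ((hasSum_poissonTailRatio_succ hl j).sub
    (hasSum_poissonTailRatio_succ hl (j + 1))).congr_fun fun i => ?_
  rw [← inv_ascFactorial_sub_inv_ascFactorial_succ]
  ring

lemma poissonTailRatio_succ_succ_le_succ (hl : 0 < l) (j : ℕ) :
    poissonTailRatio l (j + 2) ≤ poissonTailRatio l (j + 1) :=
  sub_nonneg.1 <| (hasSum_poissonTailRatio_succ_sub hl j).nonneg fun _ => by positivity

lemma antitone_poissonTailRatio_succ_sub (hl : 0 < l) :
    Antitone fun j => poissonTailRatio l (j + 1) - poissonTailRatio l (j + 2) := by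
  intro i j hij
  refine hasSum_le (fun n => ?_) (hasSum_poissonTailRatio_succ_sub hl j)
    (hasSum_poissonTailRatio_succ_sub hl i)
  gcongr

lemma poissonCDF_mul_poissonTailRatio_succ (l : ℝ) (j : ℕ) :
    poissonCDF l j * poissonTailRatio l (j + 1) = poissonTail l (j + 1) * SteinC0 l (j + 1) := by
  simp only [poissonTailRatio, SteinC0, Nat.add_sub_cancel]
  ring

lemma SteinC1_mul_poissonTail (hl : 0 < l) (m : ℕ) :
    SteinC1 l (m + 2) * poissonTail l (m + 2) =
      max (poissonTail l (m + 2) * (SteinC0 l (m + 2) - SteinC0 l (m + 1)))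
        (poissonCDF l (m + 1) * (poissonTailRatio l (m + 2) - poissonTailRatio l (m + 3))) := by
  have hcast : ((m + 2 : ℕ) : ℝ) - 1 = m + 1 := by push_cast; ring
  have hT := poissonTail_pos hl (m + 2)
  have hF := poissonCDF_pos hl (m + 1)
  have hπ := poissonPMF_pos hl (m + 1)
  have hπ₁ := succ_mul_poissonPMF_succ l (m + 1)
  have hπ₂ := succ_mul_poissonPMF_succ l (m + 2)
  have hπpos := poissonPMF_pos hl (m + 2)
  have hbelow : SteinC0 l (m + 2) *
      (poissonCDF l m * l / ((m + 1) * poissonCDF l (m + 1))) = SteinC0 l (m + 1) := by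
    simp only [SteinC0, Nat.add_sub_cancel, Nat.add_succ_sub_one, Nat.cast_succ]
    push_cast at hπ₁
    field_simp
    linear_combination -poissonCDF l m * hπ₁
  have habove : poissonTail l (m + 2) * (SteinC0 l (m + 2) *
      (poissonTail l (m + 3) * (m + 2 : ℕ) / (poissonTail l (m + 2) * l))) =
      poissonCDF l (m + 1) * poissonTailRatio l (m + 3) := by
    simp only [SteinC0, poissonTailRatio, Nat.add_succ_sub_one, Nat.cast_succ (m + 2), hπ₂]
    field
  have hC0 : 0 ≤ poissonTail l (m + 2) * SteinC0 l (m + 2) :=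
    (mul_pos hT (SteinC0_succ_pos hl (m + 1))).le
  simp only [SteinC1, Nat.add_sub_cancel, Nat.add_succ_sub_one, hcast]
  rw [← max_sub_sub_left, mul_right_comm, mul_comm (SteinC0 l (m + 2)), mul_max_of_nonneg _ _ hC0]
  congr 1
  · linear_combination -poissonTail l (m + 2) * hbelow
  · linear_combination -habove - poissonCDF_mul_poissonTailRatio_succ l (m + 1)

end SteinRatios

section SteinSolution

variable {l : ℝ} {k : ℕ}

/-- The solution of the Poisson–Stein equation for the indicator of `[k, ∞)`, where `k ≥ 1`.
The value at `0` plays no role in the equation and is set equal to the value at `1`. -/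
noncomputable def steinSolution (l : ℝ) (k j : ℕ) : ℝ :=
  if j ≤ k then -(poissonTail l k * SteinC0 l (max j 1))
  else -(poissonCDF l (k - 1) * poissonTailRatio l j)

lemma steinSolution_of_le {j : ℕ} (hj : 1 ≤ j) (hjk : j ≤ k) :
    steinSolution l k j = -(poissonTail l k * SteinC0 l j) := by
  rw [steinSolution, if_pos hjk, max_eq_left hj]

lemma steinSolution_of_ge {j : ℕ} (hk : 1 ≤ k) (hkj : k ≤ j) :
    steinSolution l k j = -(poissonCDF l (k - 1) * poissonTailRatio l j) := by
  rcases hkj.eq_or_lt with rfl | hkj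
  · obtain ⟨m, rfl⟩ := Nat.exists_eq_add_of_le' hk
    rw [steinSolution_of_le hk le_rfl, Nat.add_sub_cancel, poissonCDF_mul_poissonTailRatio_succ]
  · rw [steinSolution, if_neg hkj.not_ge]

lemma steinSolution_zero (hk : 1 ≤ k) : steinSolution l k 0 = steinSolution l k 1 := by
  simp [steinSolution, hk]

lemma isSteinSolution_steinSolution (hl : 0 < l) (hk : 1 ≤ k) :
    IsSteinSolution l k (steinSolution l k) := by
  refine ⟨steinSolution_zero hk, fun j => ?_⟩
  rcases lt_or_ge j k with hjk | hkj
  · have hmul : (j : ℝ) * steinSolution l k j = -(poissonTail l k * (j * SteinC0 l j)) := by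
      rcases Nat.eq_zero_or_pos j with rfl | hj
      · simp
      · rw [steinSolution_of_le hj hjk.le]
        ring
    rw [if_neg hjk.not_ge, hmul, steinSolution_of_le j.succ_pos hjk]
    linear_combination -poissonTail l k * mul_SteinC0_succ hl j
  · rw [if_pos hkj, steinSolution_of_ge hk hkj, steinSolution_of_ge hk (by omega)]
    obtain ⟨m, rfl⟩ := Nat.exists_eq_add_of_le' hk
    obtain ⟨i, rfl⟩ := Nat.exists_eq_add_of_le' (hk.trans hkj)
    rw [Nat.add_sub_cancel, Nat.cast_succ]
    linear_combination poissonCDF_add_poissonTail_succ l m -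
      poissonCDF l m * mul_poissonTailRatio_succ hl i

lemma abs_steinSolution_succ_sub_le (hl : 0 < l) (hk : 2 ≤ k) (j : ℕ) :
    |steinSolution l k (j + 1) - steinSolution l k j| ≤ SteinC1 l k * poissonTail l k := by
  obtain ⟨m, rfl⟩ := Nat.exists_eq_add_of_le' hk
  have hT := (poissonTail_pos hl (m + 2)).le
  have hF := (poissonCDF_pos hl (m + 1)).le
  rw [SteinC1_mul_poissonTail hl]
  rcases j with _ | i
  · rw [zero_add, steinSolution_zero (by omega), sub_self, abs_zero]
    exact le_max_of_le_left (mul_nonneg hT (sub_nonneg.2 (SteinC0_succ_le_succ_succ hl m)))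
  rcases le_or_gt i m with him | hmi
  · refine le_max_of_le_left ?_
    have hdiff : steinSolution l (m + 2) (i + 2) - steinSolution l (m + 2) (i + 1) =
        -(poissonTail l (m + 2) * (SteinC0 l (i + 2) - SteinC0 l (i + 1))) := by
      rw [steinSolution_of_le (by omega) (by omega), steinSolution_of_le (by omega) (by omega)]
      ring
    have hinc := sub_nonneg.2 (SteinC0_succ_le_succ_succ hl i)
    rw [hdiff, abs_neg, abs_of_nonneg (mul_nonneg hT hinc)]
    exact mul_le_mul_of_nonneg_left (monotone_SteinC0_succ_sub hl him) hT
  · refine le_max_of_le_right ?_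
    have hdiff : steinSolution l (m + 2) (i + 2) - steinSolution l (m + 2) (i + 1) =
        poissonCDF l (m + 1) * (poissonTailRatio l (i + 1) - poissonTailRatio l (i + 2)) := by
      rw [steinSolution_of_ge (by omega) (by omega), steinSolution_of_ge (by omega) (by omega)]
      simp only [Nat.add_succ_sub_one]
      ring
    have hdec := sub_nonneg.2 (poissonTailRatio_succ_succ_le_succ hl i)
    rw [hdiff, abs_of_nonneg (mul_nonneg hF hdec)]
    exact mul_le_mul_of_nonneg_left (antitone_poissonTailRatio_succ_sub hl hmi) hF

end SteinSolution

section FixedPoints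

open Equiv

lemma card_orbitRel_perm_prod_le_two (α : Type*)
    [Fintype (MulAction.orbitRel.Quotient (Perm α) (α × α))] :
    Fintype.card (MulAction.orbitRel.Quotient (Perm α) (α × α)) ≤ 2 := by
  classical
  let onDiagonal : MulAction.orbitRel.Quotient (Perm α) (α × α) → Prop :=
    Quotient.lift (fun p => p.1 = p.2) <| by
      rintro _ p ⟨σ, rfl⟩
      simp
  have hinj : Function.Injective onDiagonal := by
    rintro ⟨a, b⟩ ⟨c, d⟩ h
    have hiff : a = b ↔ c = d := Iff.of_eq h
    refine Quotient.sound ?_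
    rcases eq_or_ne c d with rfl | hcd
    · obtain rfl := hiff.2 rfl
      exact ⟨swap c a, by simp⟩
    · obtain ⟨σ, hca, hdb⟩ := MulAction.is_two_pretransitive_iff.1
        (Perm.isMultiplyPretransitive α 2) hcd (mt hiff.1 hcd)
      exact ⟨σ, Prod.ext hca hdb⟩
  exact Fintype.card_le_of_injective _ hinj

variable {α : Type*} [Fintype α] [DecidableEq α]

/-- The finset of fixed points of a permutation of a finite type. -/
def fixedFinset (σ : Perm α) : Finset α := {i | σ i = i}

lemma mem_fixedFinset {σ : Perm α} {i : α} : i ∈ fixedFinset σ ↔ σ i = i := by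
  simp [fixedFinset]

lemma natCard_fixed_eq_card_fixedFinset (σ : Perm α) :
    Nat.card {j // σ j = j} = #(fixedFinset σ) := by
  rw [Nat.card_eq_fintype_card, Fintype.card_subtype, fixedFinset]

lemma sum_card_fixedFinset_sq_le :
    ∑ σ : Perm α, #(fixedFinset σ) ^ 2 ≤ 2 * (Fintype.card α).factorial := by
  classical
  have := Fintype.ofFinite (MulAction.orbitRel.Quotient (Perm α) (α × α))
  have hfixed (σ : Perm α) :
      Fintype.card (MulAction.fixedBy (α × α) σ) = #(fixedFinset σ) ^ 2 := by
    rw [← Set.toFinset_card, sq, ← card_product]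
    congr 1
    ext ⟨i, j⟩
    simp [mem_fixedFinset]
  rw [← Fintype.card_perm]
  calc ∑ σ : Perm α, #(fixedFinset σ) ^ 2
      = ∑ σ : Perm α, Fintype.card (MulAction.fixedBy (α × α) σ) := by simp only [hfixed]
    _ = _ * Fintype.card (Perm α) := MulAction.sum_card_fixedBy_eq_card_orbits_mul_card_group _ _
    _ ≤ 2 * Fintype.card (Perm α) := Nat.mul_le_mul_right _ (card_orbitRel_perm_prod_le_two α)

lemma sum_perm_eq_sum_fixing_sum_swap_mul {M : Type*} [AddCommMonoid M] (i : α) (g : Perm α → M) :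
    ∑ σ, g σ = ∑ τ with τ i = i, ∑ j, g (swap i j * τ) := by
  rw [sum_comm, ← sum_fiberwise _ fun σ : Perm α => σ i]
  refine sum_congr rfl fun j _ => (sum_equiv (Equiv.mulLeft (swap i j)) (fun τ => ?_) ?_).symm
  · simp [swap_apply_eq_iff]
  · simp

lemma card_nsmul_sum_perm_eq {M : Type*} [AddCommMonoid M] (g : Perm α → M) :
    Fintype.card α • ∑ σ, g σ = ∑ τ, ∑ i ∈ fixedFinset τ, ∑ j, g (swap i j * τ) := by
  calc Fintype.card α • ∑ σ, g σ
      = ∑ i : α, ∑ σ, g σ := by rw [sum_const, card_univ]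
    _ = ∑ i, ∑ τ : Perm α with τ i = i, ∑ j, g (swap i j * τ) :=
      sum_congr rfl fun i _ => sum_perm_eq_sum_fixing_sum_swap_mul i g
    _ = _ := sum_comm' fun i τ => by simp [mem_fixedFinset]

lemma fixedFinset_swap_mul {τ : Perm α} {i j : α} (hi : τ i = i) (hij : j ≠ i) :
    fixedFinset (swap i j * τ) = ((fixedFinset τ).erase i).erase j := by
  ext x
  simp only [mem_erase, mem_fixedFinset, Perm.mul_apply, swap_apply_eq_iff]
  refine ⟨fun hx => ?_, fun ⟨hxj, hxi, hx⟩ => by rw [hx, swap_apply_of_ne_of_ne hxi hxj]⟩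
  have hxi : x ≠ i := by
    rintro rfl
    rw [swap_apply_left, hi] at hx
    exact hij hx.symm
  have hxj : x ≠ j := by
    rintro rfl
    rw [swap_apply_right] at hx
    exact hij (τ.injective (hx.trans hi.symm))
  exact ⟨hxj, hxi, by rwa [swap_apply_of_ne_of_ne hxi hxj] at hx⟩

lemma abs_sub_card_fixedFinset_swap_mul_le {f : ℕ → ℝ} {B : ℝ}
    (hf : ∀ j, |f (j + 1) - f j| ≤ B) {τ : Perm α} {i : α} (hi : i ∈ fixedFinset τ) (j : α) :
    |f (#(fixedFinset (swap i j * τ)) + 1) - f #(fixedFinset τ)| ≤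
      if j ∈ fixedFinset τ then B else 0 := by
  rcases eq_or_ne j i with rfl | hji
  · rw [swap_self, if_pos hi]
    exact hf _
  rw [fixedFinset_swap_mul (mem_fixedFinset.1 hi) hji]
  split_ifs with hj
  · rw [card_erase_add_one (mem_erase.2 ⟨hji, hj⟩), abs_sub_comm, ← card_erase_add_one hi]
    exact hf _
  · rw [erase_eq_of_notMem (by simp [hj]), card_erase_add_one hi, sub_self, abs_zero]

lemma card_mul_abs_sum_stein_le {f : ℕ → ℝ} {B : ℝ} (hf : ∀ j, |f (j + 1) - f j| ≤ B) :
    Fintype.card α * |∑ σ : Perm α,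
      (f (#(fixedFinset σ) + 1) - #(fixedFinset σ) * f #(fixedFinset σ))| ≤
      2 * B * (Fintype.card α).factorial := by
  have hB : 0 ≤ B := (abs_nonneg _).trans (hf 0)
  have hcoupling : Fintype.card α * ∑ σ : Perm α,
      (f (#(fixedFinset σ) + 1) - #(fixedFinset σ) * f #(fixedFinset σ)) =
      ∑ τ : Perm α, ∑ i ∈ fixedFinset τ, ∑ j,
        (f (#(fixedFinset (swap i j * τ)) + 1) - f #(fixedFinset τ)) := by
    rw [sum_sub_distrib, mul_sub, ← nsmul_eq_mul, card_nsmul_sum_perm_eq]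
    simp only [sum_sub_distrib, sum_const, card_univ, nsmul_eq_mul, mul_sum]
    congr! 2
    ring
  rw [← Nat.abs_cast, ← abs_mul, hcoupling]
  calc _ ≤ ∑ τ : Perm α, ∑ i ∈ fixedFinset τ, ∑ j, if j ∈ fixedFinset τ then B else 0 := by
        refine (abs_sum_le_sum_abs _ _).trans (sum_le_sum fun τ _ => ?_)
        refine (abs_sum_le_sum_abs _ _).trans (sum_le_sum fun i hi => ?_)
        exact (abs_sum_le_sum_abs _ _).trans
          (sum_le_sum fun j _ => abs_sub_card_fixedFinset_swap_mul_le hf hi j)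
    _ = B * (∑ τ : Perm α, #(fixedFinset τ) ^ 2 : ℕ) := by
        simp only [sum_ite_mem, univ_inter, sum_const, nsmul_eq_mul, Nat.cast_sum, Nat.cast_pow,
          mul_sum]
        congr! 1
        ring
    _ ≤ B * (2 * (Fintype.card α).factorial : ℕ) := by
        gcongr
        exact sum_card_fixedFinset_sq_le
    _ = _ := by push_cast; ring

end FixedPoints

lemma toReal_toMeasure_uniformOfFintype {β : Type*} [Fintype β] [Nonempty β] [MeasurableSpace β]
    [MeasurableSingletonClass β] (p : β → Prop) [DecidablePred p] :
    ((PMF.uniformOfFintype β).toMeasure {x | p x}).toReal = #{x | p x} / Fintype.card β := by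
  rw [PMF.toMeasure_uniformOfFintype_apply _ (Set.toFinite _).measurableSet]
  simp [Fintype.card_subtype]

theorem matching_md_general {α : Type*} [Fintype α] [DecidableEq α] [Nonempty α]
    [MeasurableSpace (Equiv.Perm α)] [MeasurableSingletonClass (Equiv.Perm α)]
    {k : ℕ} (hk : 2 ≤ k) :
    |((PMF.uniformOfFintype (Equiv.Perm α)).toMeasure
        {σ | k ≤ Nat.card {j : α // σ j = j}}).toReal / poissonTail 1 k - 1| ≤
      2 / (Fintype.card α : ℝ) * SteinC1 1 k := by
  have hT := poissonTail_pos one_pos k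
  have hn : (0 : ℝ) < Fintype.card α := by exact_mod_cast Fintype.card_pos
  have hfact : (0 : ℝ) < (Fintype.card α).factorial := by positivity
  obtain ⟨-, hf⟩ := isSteinSolution_steinSolution one_pos (one_le_two.trans hk)
  have hstein : ∑ σ : Equiv.Perm α, (steinSolution 1 k (#(fixedFinset σ) + 1) -
      #(fixedFinset σ) * steinSolution 1 k #(fixedFinset σ)) =
      #{σ : Equiv.Perm α | k ≤ #(fixedFinset σ)} -
        (Fintype.card α).factorial * poissonTail 1 k := by
    simp only [one_mul] at hf
    simp only [hf, sum_sub_distrib, sum_boole, sum_const, card_univ, Fintype.card_perm,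
      nsmul_eq_mul]
  have hbound := card_mul_abs_sum_stein_le (α := α) (abs_steinSolution_succ_sub_le one_pos hk)
  simp only [natCard_fixed_eq_card_fixedFinset]
  rw [toReal_toMeasure_uniformOfFintype, Fintype.card_perm, div_div, div_sub_one (by positivity),
    ← hstein, abs_div, abs_of_pos (mul_pos hfact hT), div_mul_eq_mul_div, div_le_div_iff₀
    (mul_pos hfact hT) hn]
  linarith

/-- Matching problem: moderate deviation bound for the number of fixed points
of a uniform random permutation. -/
theorem matching_md (n : ℕ) (hn : 1 ≤ n)
    [MeasurableSpace (Equiv.Perm (Fin n))] [MeasurableSingletonClass (Equiv.Perm (Fin n))]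
    (P : Measure (Equiv.Perm (Fin n)))
    (hP : P = (PMF.uniformOfFintype (Equiv.Perm (Fin n))).toMeasure)
    (W : Equiv.Perm (Fin n) → ℕ) (hW : W = fun σ => Nat.card {j : Fin n // σ j = j})
    (k : ℕ) (hk : 2 ≤ k) :
    |(P {σ | k ≤ W σ}).toReal / poissonTail 1 k - 1| ≤ (2 / (n : ℝ)) * SteinC1 1 k := by
  subst hP hW
  have := Fin.pos_iff_nonempty.1 hn
  simpa only [Fintype.card_fin] using matching_md_general (α := Fin n) hk
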